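/- arXiv:1905.09320 — 3 statements merged into one kernel-verified Lean document; each statement's English description precedes it below -/
import Mathlib

section
/- Let a ~ N(0, I_n), x, h ∈ R^n with ‖x‖²‖h‖² > (x^T h)², and let f: R → R be bounded measurable. Then E[(a^T h)² f(a^T x / a^T h)] = ∫_{-∞}^{∞} f(u) · (2/π) · (1−cos²θ)^{3/2} ρ ‖h‖² / ((uρ − cos θ)² + 1 − cos²θ)² du, where ρ = ‖h‖/‖x‖ and cos θ = x^T h/(‖x‖‖h‖). -/
open MeasureTheory ProbabilityTheory Real

/-- The standard Gaussian measure `N(0, I_n)` on `ℝⁿ`. -/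
noncomputable def stdGaussian (n : ℕ) : Measure (Fin n → ℝ) :=
  Measure.pi fun _ => gaussianReal 0 1

/-! Subtracting from `X = aᵀx` its regression on `Y = aᵀh` leaves a Gaussian residual that is
uncorrelated with `Y`, hence independent of it, and shifts the ratio `X / Y` by the constant
regression coefficient; so it suffices to treat independent `X` and `Y`. Conditionally on `Y = y`,
the ratio is then Gaussian with variance `Var X / y²`, and integrating out `y` against the weight
`y²` is a Gaussian third absolute moment. -/

open scoped NNReal ENNReal

lemma integral_abs_pow_mul_exp_neg_mul_sq (k : ℕ) {b : ℝ} (hb : 0 < b) :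
    ∫ t : ℝ, |t| ^ k * exp (-b * t ^ 2) = b ^ (-((k : ℝ) + 1) / 2) * Gamma (((k : ℝ) + 1) / 2) := by
  calc ∫ t : ℝ, |t| ^ k * exp (-b * t ^ 2)
      = 2 * ∫ t in Set.Ioi (0 : ℝ), t ^ k * exp (-b * t ^ 2) := by
        simp only [← integral_comp_abs (f := fun t : ℝ => t ^ k * exp (-b * t ^ 2)), sq_abs]
    _ = 2 * ∫ t in Set.Ioi (0 : ℝ), t ^ (k : ℝ) * exp (-b * t ^ (2 : ℝ)) := by
        simp only [rpow_natCast, rpow_two]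
    _ = b ^ (-((k : ℝ) + 1) / 2) * Gamma (((k : ℝ) + 1) / 2) := by
        rw [integral_rpow_mul_exp_neg_mul_rpow two_pos (by linarith [k.cast_nonneg (α := ℝ)]) hb]
        ring

lemma lintegral_abs_pow_mul_exp_neg_mul_sq (k : ℕ) {b : ℝ} (hb : 0 < b) :
    ∫⁻ t : ℝ, ENNReal.ofReal (|t| ^ k * exp (-b * t ^ 2)) =
      ENNReal.ofReal (b ^ (-((k : ℝ) + 1) / 2) * Gamma (((k : ℝ) + 1) / 2)) := by
  have hint : Integrable fun t : ℝ => |t| ^ k * exp (-b * t ^ 2) := by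
    refine .of_integral_ne_zero ?_
    rw [integral_abs_pow_mul_exp_neg_mul_sq k hb]
    have := Gamma_pos_of_pos (s := ((k : ℝ) + 1) / 2) (by positivity)
    positivity
  rw [← ofReal_integral_eq_lintegral_ofReal hint (.of_forall fun t => by positivity),
    integral_abs_pow_mul_exp_neg_mul_sq k hb]

/-- The Lebesgue density of the law of `X / Y` under the measure `Y² · P`, for a centred Gaussian
pair `(X, Y)` with `Var X = v`, `Var Y = w` and `Cov(X, Y) = c`. -/
noncomputable def sqWeightedRatioDensity (v w c u : ℝ) : ℝ :=
  2 / π * (v * w - c ^ 2) ^ (3 / 2 : ℝ) * w ^ 2 / ((u * w - c) ^ 2 + (v * w - c ^ 2)) ^ 2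

lemma measurable_sqWeightedRatioDensity (v w c : ℝ) :
    Measurable (sqWeightedRatioDensity v w c) := by
  unfold sqWeightedRatioDensity
  fun_prop

lemma sqWeightedRatioDensity_nonneg {v w c : ℝ} (hdet : c ^ 2 ≤ v * w) (u : ℝ) :
    0 ≤ sqWeightedRatioDensity v w c u := by
  have : 0 ≤ v * w - c ^ 2 := sub_nonneg.2 hdet
  unfold sqWeightedRatioDensity
  positivity

lemma sqWeightedRatioDensity_eq_comp_sub (v : ℝ) {w : ℝ} (hw : w ≠ 0) (c u : ℝ) :
    sqWeightedRatioDensity v w c u = sqWeightedRatioDensity (v - c ^ 2 / w) w 0 (u - c / w) := by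
  have hdet : (v - c ^ 2 / w) * w - 0 ^ 2 = v * w - c ^ 2 := by field_simp; ring
  have hnum : (u - c / w) * w - 0 = u * w - c := by field_simp; ring
  unfold sqWeightedRatioDensity
  rw [hdet, hnum]

lemma sqWeightedRatioDensity_zero {v w : ℝ} (hv : 0 < v) (hw : 0 < w) (u : ℝ) :
    sqWeightedRatioDensity v w 0 u =
      (2 * π * √(v * w))⁻¹ * (((u ^ 2 / v + 1 / w) / 2) ^ 2)⁻¹ := by
  have hpow : (v * w) ^ (3 / 2 : ℝ) = (v * w) ^ 2 / √(v * w) := by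
    rw [sqrt_eq_rpow, ← rpow_natCast, ← rpow_sub (by positivity)]
    norm_num
  unfold sqWeightedRatioDensity
  rw [zero_pow two_ne_zero, sub_zero, sub_zero, hpow]
  field_simp

lemma sqWeightedRatioDensity_eq_correlation {v w c : ℝ} (hv : 0 < v) (hw : 0 < w)
    (hdet : c ^ 2 ≤ v * w) (u : ℝ) :
    sqWeightedRatioDensity v w c u =
      2 / π * (1 - (c / (√v * √w)) ^ 2) ^ (3 / 2 : ℝ) * (√w / √v) * w /
        ((u * (√w / √v) - c / (√v * √w)) ^ 2 + 1 - (c / (√v * √w)) ^ 2) ^ 2 := by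
  obtain ⟨σ, hσ, rfl⟩ : ∃ σ, 0 < σ ∧ σ ^ 2 = v := ⟨√v, sqrt_pos.2 hv, sq_sqrt hv.le⟩
  obtain ⟨τ, hτ, rfl⟩ : ∃ τ, 0 < τ ∧ τ ^ 2 = w := ⟨√w, sqrt_pos.2 hw, sq_sqrt hw.le⟩
  rw [sqrt_sq hσ.le, sqrt_sq hτ.le]
  have hsin : 1 - (c / (σ * τ)) ^ 2 = (σ ^ 2 * τ ^ 2 - c ^ 2) / (σ * τ) ^ 2 := by
    field_simp
  have hpow : ((σ * τ) ^ 2) ^ (3 / 2 : ℝ) = (σ * τ) ^ 3 := by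
    rw [← rpow_natCast, ← rpow_natCast, ← rpow_mul (by positivity)]
    norm_num
  have hdenom : (u * (τ / σ) - c / (σ * τ)) ^ 2 + (σ ^ 2 * τ ^ 2 - c ^ 2) / (σ * τ) ^ 2 =
      ((u * τ ^ 2 - c) ^ 2 + (σ ^ 2 * τ ^ 2 - c ^ 2)) / (σ * τ) ^ 2 := by
    field_simp
  unfold sqWeightedRatioDensity
  rw [add_sub_assoc, hsin, div_rpow (sub_nonneg.2 hdet) (by positivity), hpow, hdenom,
    div_pow _ _ 2]
  field_simp

lemma lintegral_comp_div_gaussianReal {v : ℝ≥0} (hv : v ≠ 0) (m : ℝ) {y : ℝ} (hy : y ≠ 0)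
    {g : ℝ → ℝ≥0∞} (hg : Measurable g) :
    ∫⁻ s, g (s / y) ∂gaussianReal m v =
      ∫⁻ u, gaussianPDF (m / y) (v / .mk (y ^ 2) (sq_nonneg y)) u * g u := by
  have hvar : v / .mk (y ^ 2) (sq_nonneg y) ≠ 0 :=
    div_ne_zero hv fun h => hy (pow_eq_zero_iff two_ne_zero |>.1 (congrArg NNReal.toReal h))
  rw [← lintegral_map hg (by fun_prop), gaussianReal_map_div_const,
    gaussianReal_of_var_ne_zero _ hvar,
    lintegral_withDensity_eq_lintegral_mul _ (measurable_gaussianPDF _ _) hg]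
  rfl

lemma gaussianPDFReal_mul_sq_mul_gaussianPDFReal_div_sq {v w : ℝ≥0} (hv : v ≠ 0) (hw : w ≠ 0)
    {y : ℝ} (hy : y ≠ 0) (u : ℝ) :
    gaussianPDFReal 0 w y * (y ^ 2 * gaussianPDFReal 0 (v / .mk (y ^ 2) (sq_nonneg y)) u) =
      (2 * π * √(v * w))⁻¹ * (|y| ^ 3 * exp (-((u ^ 2 / v + 1 / w) / 2) * y ^ 2)) := by
  have hroot : √(2 * π * w) * √(2 * π * (v / y ^ 2)) = 2 * π * √(v * w) / |y| := by
    rw [← sqrt_mul (by positivity), ← sqrt_sq_eq_abs y, ← sqrt_sq (show 0 ≤ 2 * π by positivity),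
      ← sqrt_mul (by positivity), ← sqrt_div (by positivity), sqrt_sq (by positivity)]
    ring_nf
  have hexp : exp (-y ^ 2 / (2 * w)) * exp (-u ^ 2 / (2 * (v / y ^ 2))) =
      exp (-((u ^ 2 / v + 1 / w) / 2) * y ^ 2) := by
    rw [← exp_add]
    congr 1
    field_simp
    ring
  simp only [gaussianPDFReal, sub_zero, NNReal.coe_div, NNReal.coe_mk]
  calc (√(2 * π * w))⁻¹ * exp (-y ^ 2 / (2 * w)) *
        (y ^ 2 * ((√(2 * π * (v / y ^ 2)))⁻¹ * exp (-u ^ 2 / (2 * (v / y ^ 2)))))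
      = (√(2 * π * w) * √(2 * π * (v / y ^ 2)))⁻¹ * |y| ^ 2 *
          (exp (-y ^ 2 / (2 * w)) * exp (-u ^ 2 / (2 * (v / y ^ 2)))) := by
        rw [sq_abs]
        ring
    _ = (2 * π * √(v * w))⁻¹ * (|y| ^ 3 * exp (-((u ^ 2 / v + 1 / w) / 2) * y ^ 2)) := by
        rw [hroot, hexp, inv_div]
        ring

lemma gaussianPDF_mul_lintegral_sq_mul_comp_div {v w : ℝ≥0} (hv : v ≠ 0) (hw : w ≠ 0)
    {y : ℝ} (hy : y ≠ 0) {g : ℝ → ℝ≥0∞} (hg : Measurable g) :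
    gaussianPDF 0 w y * ∫⁻ s, ENNReal.ofReal (y ^ 2) * g (s / y) ∂gaussianReal 0 v =
      ∫⁻ u, ENNReal.ofReal ((2 * π * √(v * w))⁻¹ *
        (|y| ^ 3 * exp (-((u ^ 2 / v + 1 / w) / 2) * y ^ 2))) * g u := by
  rw [lintegral_const_mul _ (by fun_prop), lintegral_comp_div_gaussianReal hv 0 hy hg, zero_div,
    ← lintegral_const_mul _ (by fun_prop), ← lintegral_const_mul _ (by fun_prop)]
  refine lintegral_congr fun u => ?_
  rw [← gaussianPDFReal_mul_sq_mul_gaussianPDFReal_div_sq hv hw hy,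
    ENNReal.ofReal_mul (gaussianPDFReal_nonneg _ _ _), ENNReal.ofReal_mul (sq_nonneg y)]
  simp only [gaussianPDF, mul_assoc]

lemma lintegral_abs_pow_three_mul_exp_eq_sqWeightedRatioDensity {v w : ℝ} (hv : 0 < v)
    (hw : 0 < w) (u : ℝ) :
    ∫⁻ y : ℝ, ENNReal.ofReal ((2 * π * √(v * w))⁻¹ *
        (|y| ^ 3 * exp (-((u ^ 2 / v + 1 / w) / 2) * y ^ 2))) =
      ENNReal.ofReal (sqWeightedRatioDensity v w 0 u) := by
  have hconst : 0 ≤ (2 * π * √(v * w))⁻¹ := by positivity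
  simp_rw [ENNReal.ofReal_mul hconst]
  rw [lintegral_const_mul _ (by fun_prop),
    lintegral_abs_pow_mul_exp_neg_mul_sq 3 (by positivity), ← ENNReal.ofReal_mul hconst,
    sqWeightedRatioDensity_zero hv hw]
  norm_num

lemma lintegral_sq_mul_comp_div_gaussianReal_prod {v w : ℝ≥0} (hv : v ≠ 0) (hw : w ≠ 0)
    {g : ℝ → ℝ≥0∞} (hg : Measurable g) :
    ∫⁻ p : ℝ × ℝ, ENNReal.ofReal (p.2 ^ 2) * g (p.1 / p.2)
        ∂(gaussianReal 0 v).prod (gaussianReal 0 w) =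
      ∫⁻ u, ENNReal.ofReal (sqWeightedRatioDensity v w 0 u) * g u := by
  calc ∫⁻ p : ℝ × ℝ, ENNReal.ofReal (p.2 ^ 2) * g (p.1 / p.2)
        ∂(gaussianReal 0 v).prod (gaussianReal 0 w)
      = ∫⁻ y, gaussianPDF 0 w y * ∫⁻ s, ENNReal.ofReal (y ^ 2) * g (s / y) ∂gaussianReal 0 v := by
        rw [lintegral_prod_symm _ (by fun_prop), gaussianReal_of_var_ne_zero _ hw,
          lintegral_withDensity_eq_lintegral_mul _ (measurable_gaussianPDF _ _)
            (Measurable.lintegral_prod_left (by fun_prop))]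
        rfl
    _ = ∫⁻ y, ∫⁻ u, ENNReal.ofReal ((2 * π * √(v * w))⁻¹ *
          (|y| ^ 3 * exp (-((u ^ 2 / v + 1 / w) / 2) * y ^ 2))) * g u :=
        lintegral_congr_ae ((Measure.ae_ne volume 0).mono fun _ hy =>
          gaussianPDF_mul_lintegral_sq_mul_comp_div hv hw hy hg)
    _ = ∫⁻ u, ENNReal.ofReal (sqWeightedRatioDensity v w 0 u) * g u := by
        rw [lintegral_lintegral_swap (by fun_prop)]
        refine lintegral_congr fun u => ?_
        rw [lintegral_mul_const _ (by fun_prop),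
          lintegral_abs_pow_three_mul_exp_eq_sqWeightedRatioDensity (by positivity)
            (by positivity)]

section GaussianPair

variable {Ω : Type*} {mΩ : MeasurableSpace Ω} {P : Measure Ω} {X Y : Ω → ℝ}

lemma hasLaw_regression_residual (hXY : HasGaussianLaw (fun ω => (X ω, Y ω)) P)
    (hVarY : Var[Y; P] ≠ 0) :
    HasLaw (fun ω => (X ω - cov[X, Y; P] / Var[Y; P] * Y ω, Y ω))
      ((gaussianReal (P[X] - cov[X, Y; P] / Var[Y; P] * P[Y])
          (Var[X; P] - cov[X, Y; P] ^ 2 / Var[Y; P]).toNNReal).prod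
        (gaussianReal P[Y] Var[Y; P].toNNReal)) P := by
  have := hXY.isProbabilityMeasure
  set b := cov[X, Y; P] / Var[Y; P] with hb
  have hXL2 : MemLp X 2 P := hXY.fst.memLp_two
  have hYL2 : MemLp Y 2 P := hXY.snd.memLp_two
  have hbYL2 : MemLp (fun ω => b * Y ω) 2 P := hYL2.const_mul b
  have hZY : HasGaussianLaw (fun ω => (X ω - b * Y ω, Y ω)) P :=
    hXY.map_fun ((ContinuousLinearMap.fst ℝ ℝ ℝ - b • ContinuousLinearMap.snd ℝ ℝ ℝ).prod
      (ContinuousLinearMap.snd ℝ ℝ ℝ))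
  have hmean : P[fun ω => X ω - b * Y ω] = P[X] - b * P[Y] := by
    rw [integral_sub (hXL2.integrable one_le_two) (hbYL2.integrable one_le_two),
      integral_const_mul]
  have hvar : Var[fun ω => X ω - b * Y ω; P] = Var[X; P] - cov[X, Y; P] ^ 2 / Var[Y; P] := by
    rw [variance_fun_sub hXL2 hbYL2, covariance_const_mul_right, variance_const_mul, hb]
    field_simp
    ring
  have hcov : cov[fun ω => X ω - b * Y ω, Y; P] = 0 := by
    rw [covariance_fun_sub_left hXL2 hbYL2 hYL2, covariance_const_mul_left,
      covariance_self hYL2.aemeasurable, hb, div_mul_cancel₀ _ hVarY, sub_self]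
  have hZlaw : HasLaw (fun ω => X ω - b * Y ω) (gaussianReal (P[X] - b * P[Y])
      (Var[X; P] - cov[X, Y; P] ^ 2 / Var[Y; P]).toNNReal) P :=
    ⟨hZY.fst.aemeasurable, by rw [hZY.fst.map_eq_gaussianReal, hmean, hvar]⟩
  have hYlaw : HasLaw Y (gaussianReal P[Y] Var[Y; P].toNNReal) P :=
    ⟨hXY.snd.aemeasurable, hXY.snd.map_eq_gaussianReal⟩
  exact (hZY.indepFun_of_covariance_eq_zero hcov).hasLaw_prod hZlaw hYlaw

lemma lintegral_sq_mul_comp_div_of_hasGaussianLaw (hXY : HasGaussianLaw (fun ω => (X ω, Y ω)) P)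
    (hX : P[X] = 0) (hY : P[Y] = 0) (hdet : cov[X, Y; P] ^ 2 < Var[X; P] * Var[Y; P])
    {g : ℝ → ℝ≥0∞} (hg : Measurable g) :
    ∫⁻ ω, ENNReal.ofReal (Y ω ^ 2) * g (X ω / Y ω) ∂P =
      ∫⁻ u, ENNReal.ofReal (sqWeightedRatioDensity Var[X; P] Var[Y; P] cov[X, Y; P] u) * g u := by
  have hVarY : 0 < Var[Y; P] := (variance_nonneg Y P).lt_of_ne' fun h => by
    rw [h, mul_zero] at hdet
    exact hdet.not_ge (sq_nonneg _)
  have hVarZ : 0 < Var[X; P] - cov[X, Y; P] ^ 2 / Var[Y; P] := by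
    rwa [sub_pos, div_lt_iff₀ hVarY]
  have hlaw := hasLaw_regression_residual hXY hVarY.ne'
  rw [hX, hY, mul_zero, sub_zero] at hlaw
  set b := cov[X, Y; P] / Var[Y; P]
  calc ∫⁻ ω, ENNReal.ofReal (Y ω ^ 2) * g (X ω / Y ω) ∂P
      = ∫⁻ ω, ENNReal.ofReal (Y ω ^ 2) * g ((X ω - b * Y ω) / Y ω + b) ∂P := by
        refine lintegral_congr fun ω => ?_
        rcases eq_or_ne (Y ω) 0 with h0 | h0
        · simp only [h0, zero_pow two_ne_zero, ENNReal.ofReal_zero, zero_mul]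
        · rw [sub_div, mul_div_cancel_right₀ _ h0, sub_add_cancel]
    _ = ∫⁻ u, ENNReal.ofReal (sqWeightedRatioDensity
          (Var[X; P] - cov[X, Y; P] ^ 2 / Var[Y; P]) Var[Y; P] 0 u) * g (u + b) := by
        rw [hlaw.lintegral_comp (f := fun p : ℝ × ℝ => ENNReal.ofReal (p.2 ^ 2) * g (p.1 / p.2 + b))
            (by fun_prop),
          lintegral_sq_mul_comp_div_gaussianReal_prod (Real.toNNReal_pos.2 hVarZ).ne'
            (Real.toNNReal_pos.2 hVarY).ne' (g := fun u => g (u + b)) (by fun_prop),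
          Real.coe_toNNReal _ hVarZ.le, Real.coe_toNNReal _ hVarY.le]
    _ = ∫⁻ u, ENNReal.ofReal (sqWeightedRatioDensity Var[X; P] Var[Y; P] cov[X, Y; P] u) *
          g u := by
        rw [← lintegral_sub_right_eq_self _ b]
        simp only [sqWeightedRatioDensity_eq_comp_sub _ hVarY.ne' cov[X, Y; P], sub_add_cancel, b]

lemma map_div_withDensity_sq_of_hasGaussianLaw (hXY : HasGaussianLaw (fun ω => (X ω, Y ω)) P)
    (hX : P[X] = 0) (hY : P[Y] = 0) (hdet : cov[X, Y; P] ^ 2 < Var[X; P] * Var[Y; P]) :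
    (P.withDensity fun ω => ENNReal.ofReal (Y ω ^ 2)).map (fun ω => X ω / Y ω) =
      volume.withDensity fun u =>
        ENNReal.ofReal (sqWeightedRatioDensity Var[X; P] Var[Y; P] cov[X, Y; P] u) := by
  have hXm : AEMeasurable X P := hXY.fst.aemeasurable
  have hYm : AEMeasurable Y P := hXY.snd.aemeasurable
  have hratio : AEMeasurable (fun ω => X ω / Y ω) P := by fun_prop
  have hdens := (measurable_sqWeightedRatioDensity Var[X; P] Var[Y; P] cov[X, Y; P]).ennreal_ofReal
  refine Measure.ext_of_lintegral _ fun g hg => ?_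
  rw [lintegral_map' hg.aemeasurable (hratio.mono_ac (withDensity_absolutelyContinuous _ _)),
    lintegral_withDensity_eq_lintegral_mul₀ (by fun_prop) (by fun_prop),
    lintegral_withDensity_eq_lintegral_mul _ hdens hg]
  exact lintegral_sq_mul_comp_div_of_hasGaussianLaw hXY hX hY hdet hg

lemma integral_sq_smul_comp_div_of_hasGaussianLaw {E : Type*} [NormedAddCommGroup E]
    [NormedSpace ℝ E] (hXY : HasGaussianLaw (fun ω => (X ω, Y ω)) P)
    (hX : P[X] = 0) (hY : P[Y] = 0) (hdet : cov[X, Y; P] ^ 2 < Var[X; P] * Var[Y; P])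
    {f : ℝ → E} (hf : AEStronglyMeasurable f) :
    ∫ ω, Y ω ^ 2 • f (X ω / Y ω) ∂P =
      ∫ u, sqWeightedRatioDensity Var[X; P] Var[Y; P] cov[X, Y; P] u • f u := by
  have hXm : AEMeasurable X P := hXY.fst.aemeasurable
  have hYm : AEMeasurable Y P := hXY.snd.aemeasurable
  have hratio : AEMeasurable (fun ω => X ω / Y ω) P := by fun_prop
  have hdens := (measurable_sqWeightedRatioDensity Var[X; P] Var[Y; P] cov[X, Y; P]).ennreal_ofReal
  have hmap := map_div_withDensity_sq_of_hasGaussianLaw hXY hX hY hdet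
  calc ∫ ω, Y ω ^ 2 • f (X ω / Y ω) ∂P
      = ∫ ω, f (X ω / Y ω) ∂P.withDensity fun ω => ENNReal.ofReal (Y ω ^ 2) := by
        rw [integral_withDensity_eq_integral_toReal_smul₀ (by fun_prop)
          (.of_forall fun _ => ENNReal.ofReal_lt_top)]
        simp only [ENNReal.toReal_ofReal (sq_nonneg _)]
    _ = ∫ u, f u ∂volume.withDensity fun u =>
          ENNReal.ofReal (sqWeightedRatioDensity Var[X; P] Var[Y; P] cov[X, Y; P] u) := by
        rw [← hmap, integral_map (hratio.mono_ac (withDensity_absolutelyContinuous _ _))]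
        rw [hmap]
        exact hf.mono_ac (withDensity_absolutelyContinuous _ _)
    _ = ∫ u, sqWeightedRatioDensity Var[X; P] Var[Y; P] cov[X, Y; P] u • f u := by
        rw [integral_withDensity_eq_integral_toReal_smul hdens
          (.of_forall fun _ => ENNReal.ofReal_lt_top)]
        simp only [ENNReal.toReal_ofReal (sqWeightedRatioDensity_nonneg hdet.le _)]

theorem expectation_weighted_quadratic_general {E : Type*} [NormedAddCommGroup E]
    [NormedSpace ℝ E] (hXY : HasGaussianLaw (fun ω => (X ω, Y ω)) P)
    (hX : P[X] = 0) (hY : P[Y] = 0) (hdet : Var[X; P] * Var[Y; P] > cov[X, Y; P] ^ 2)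
    {f : ℝ → E} (hf : AEStronglyMeasurable f) :
    ∫ ω, Y ω ^ 2 • f (X ω / Y ω) ∂P =
      ∫ u : ℝ,
        (let ρ := √Var[Y; P] / √Var[X; P]
         let c := cov[X, Y; P] / (√Var[X; P] * √Var[Y; P])
         (2 / π) * (1 - c ^ 2) ^ ((3 : ℝ) / 2) * ρ * Var[Y; P] /
           ((u * ρ - c) ^ 2 + 1 - c ^ 2) ^ 2) • f u := by
  rw [integral_sq_smul_comp_div_of_hasGaussianLaw hXY hX hY hdet hf]
  have hprod : 0 < Var[X; P] * Var[Y; P] := (sq_nonneg _).trans_lt hdet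
  have hVarX := pos_of_mul_pos_left hprod (variance_nonneg Y P)
  have hVarY := pos_of_mul_pos_right hprod (variance_nonneg X P)
  simp only [sqWeightedRatioDensity_eq_correlation hVarX hVarY hdet.le]

end GaussianPair

section LinearForms

variable {Ω ι : Type*} [Fintype ι] {mΩ : MeasurableSpace Ω} {P : Measure Ω} {X : ι → Ω → ℝ}

lemma hasGaussianLaw_sum_mul_prodMk_sum_mul (hX : ∀ i, HasGaussianLaw (X i) P)
    (hindep : iIndepFun X P) (x h : ι → ℝ) :
    HasGaussianLaw (fun ω => (∑ i, X i ω * x i, ∑ i, X i ω * h i)) P := by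
  have := (hindep.hasGaussianLaw hX).map_fun
    ((∑ i, x i • ContinuousLinearMap.proj (R := ℝ) (φ := fun _ : ι => ℝ) i).prod
      (∑ i, h i • ContinuousLinearMap.proj (R := ℝ) (φ := fun _ : ι => ℝ) i))
  simpa [mul_comm] using this

lemma covariance_sum_mul_sum_mul [IsFiniteMeasure P] (hX : ∀ i, MemLp (X i) 2 P)
    (hindep : Pairwise fun i j => X i ⟂ᵢ[P] X j) (x h : ι → ℝ) :
    cov[fun ω => ∑ i, X i ω * x i, fun ω => ∑ i, X i ω * h i; P] =
      ∑ i, Var[X i; P] * (x i * h i) := by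
  rw [covariance_fun_sum_fun_sum (fun i => (hX i).mul_const (x i))
    fun i => (hX i).mul_const (h i)]
  refine Finset.sum_congr rfl fun i _ => ?_
  rw [Finset.sum_eq_single i]
  · rw [covariance_mul_const_left, covariance_mul_const_right, covariance_self (hX i).aemeasurable]
    ring
  · intro j _ hji
    rw [covariance_mul_const_left, covariance_mul_const_right,
      (hindep hji.symm).covariance_eq_zero (hX i) (hX j), zero_mul, zero_mul]
  · exact fun hi => absurd (Finset.mem_univ i) hi

end LinearForms

lemma hasLaw_eval_stdGaussian (n : ℕ) (i : Fin n) :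
    HasLaw (fun a : Fin n → ℝ => a i) (gaussianReal 0 1) (stdGaussian n) :=
  (measurePreserving_eval (fun _ : Fin n => gaussianReal 0 1) i).hasLaw

lemma iIndepFun_eval_stdGaussian (n : ℕ) :
    iIndepFun (fun (i : Fin n) (a : Fin n → ℝ) => a i) (stdGaussian n) :=
  iIndepFun_pi (X := fun _ => id) fun _ => aemeasurable_id

lemma hasGaussianLaw_linearForms_stdGaussian {n : ℕ} (x h : Fin n → ℝ) :
    HasGaussianLaw (fun a : Fin n → ℝ => (∑ i, a i * x i, ∑ i, a i * h i)) (stdGaussian n) :=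
  hasGaussianLaw_sum_mul_prodMk_sum_mul (fun i => (hasLaw_eval_stdGaussian n i).hasGaussianLaw)
    (iIndepFun_eval_stdGaussian n) x h

lemma integral_linearForm_stdGaussian {n : ℕ} (x : Fin n → ℝ) :
    ∫ a, ∑ i, a i * x i ∂stdGaussian n = 0 := by
  rw [integral_finsetSum _ fun i _ =>
    (hasLaw_eval_stdGaussian n i).hasGaussianLaw.integrable.mul_const (x i)]
  refine Finset.sum_eq_zero fun i _ => ?_
  rw [integral_mul_const, (hasLaw_eval_stdGaussian n i).integral_eq, integral_id_gaussianReal,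
    zero_mul]

lemma covariance_linearForms_stdGaussian {n : ℕ} (x h : Fin n → ℝ) :
    cov[fun a => ∑ i, a i * x i, fun a => ∑ i, a i * h i; stdGaussian n] = ∑ i, x i * h i := by
  have := (iIndepFun_eval_stdGaussian n).isProbabilityMeasure
  rw [covariance_sum_mul_sum_mul (fun i => (hasLaw_eval_stdGaussian n i).hasGaussianLaw.memLp_two)
    (fun i j hij => (iIndepFun_eval_stdGaussian n).indepFun hij)]
  simp only [(hasLaw_eval_stdGaussian n _).variance_eq, variance_id_gaussianReal, NNReal.coe_one,
    one_mul]

lemma variance_linearForm_stdGaussian {n : ℕ} (x : Fin n → ℝ) :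
    Var[fun a => ∑ i, a i * x i; stdGaussian n] = ∑ i, x i ^ 2 := by
  have hmeas : Measurable fun a : Fin n → ℝ => ∑ i, a i * x i := by fun_prop
  rw [← covariance_self hmeas.aemeasurable, covariance_linearForms_stdGaussian]
  simp only [sq]

/-- For `a ~ N(0, I_n)`, `x, h` with `‖x‖²‖h‖² > (xᵀh)²`, and bounded measurable `f`,
`E[(aᵀh)² f(aᵀx / aᵀh)] = ∫ f(u) · (2/π)(1−cos²θ)^{3/2} ρ ‖h‖² / ((uρ − cos θ)² + 1 − cos²θ)² du`,
where `ρ = ‖h‖/‖x‖` and `cos θ = xᵀh/(‖x‖‖h‖)`. -/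
theorem expectation_weighted_quadratic (n : ℕ) (x h : Fin n → ℝ)
    (hdet : (∑ i, x i ^ 2) * (∑ i, h i ^ 2) > (∑ i, x i * h i) ^ 2)
    (f : ℝ → ℝ) (hf : Measurable f) (hb : ∃ M : ℝ, ∀ v, |f v| ≤ M) :
    ∫ a, (∑ i, a i * h i) ^ 2 * f ((∑ i, a i * x i) / (∑ i, a i * h i)) ∂(stdGaussian n)
      = ∫ u : ℝ,
          f u *
            (let ρ := Real.sqrt (∑ i, h i ^ 2) / Real.sqrt (∑ i, x i ^ 2)
             let c := (∑ i, x i * h i) / (Real.sqrt (∑ i, x i ^ 2) * Real.sqrt (∑ i, h i ^ 2))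
             (2 / π) * (1 - c ^ 2) ^ ((3 : ℝ) / 2) * ρ * (∑ i, h i ^ 2) /
               ((u * ρ - c) ^ 2 + 1 - c ^ 2) ^ 2) := by
  rw [← variance_linearForm_stdGaussian, ← variance_linearForm_stdGaussian,
    ← covariance_linearForms_stdGaussian] at hdet ⊢
  simpa only [smul_eq_mul, mul_comm (f _)] using
    expectation_weighted_quadratic_general (hasGaussianLaw_linearForms_stdGaussian x h)
      (integral_linearForm_stdGaussian x) (integral_linearForm_stdGaussian h) hdet
      hf.aestronglyMeasurable
end

section
/- Let a ~ N(0, I_n) be standard Gaussian, x, z ∈ R^n unit vectors with x ⊥ z, and α, β > 0. Then E[((a^T x)² − (a^T z)²) · 1{|a^T x| > β} · tanh((a^T x)²/α)] ≥ (β e^{−β²/2}/√(2π)) · (1 − e^{−β²/α}(α/(2+α))^{3/2}) > 0. -/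
open MeasureTheory ProbabilityTheory Real

/-!
Rotation invariance makes `aᵀx` and `aᵀz` independent standard Gaussians, so the expectation
equals `2 * I`, where `I` is the integral of `(t² - 1) * tanh (t² / α)` over `(β, ∞)` under
`N(0, 1)`. A monotone `h` satisfies `(t² - 1) * (h t - h (max 1 β)) ≥ 0` for `t > β`, so the
integral of `(t² - 1) * h t` is at least `h (max 1 β)` times that of `t² - 1`, which is `β φ(β)`.
For `α ≤ 3 / 2` one takes `h t = tanh (t² / α)`, which is at least `1 / 2` at `max 1 β`.
For `α ≥ 3 / 2` one splits `tanh u = H u + tanh u * H u` with `H u = (1 - exp (-2u)) / 2`: the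
second term is monotone and nonnegative, hence contributes at least `0`, and the first is a
Gaussian moment.
-/

open Filter Set Topology RealInnerProductSpace

section StandardGaussian

variable {E : Type*} [NormedAddCommGroup E] [InnerProductSpace ℝ E] [FiniteDimensional ℝ E]
  [MeasurableSpace E] [BorelSpace E] {u v : E}

lemma hasGaussianLaw_inner_prodMk_inner (u v : E) :
    HasGaussianLaw (fun a ↦ (⟪u, a⟫, ⟪v, a⟫)) (ProbabilityTheory.stdGaussian E) :=
  IsGaussian.hasGaussianLaw_id.map ((innerSL ℝ u).prod (innerSL ℝ v))

lemma hasLaw_inner_stdGaussian (hu : ‖u‖ = 1) :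
    HasLaw (fun a ↦ ⟪u, a⟫) (gaussianReal 0 1) (ProbabilityTheory.stdGaussian E) where
  map_eq := by
    have hmean := integral_strongDual_stdGaussian (innerSL ℝ u)
    have hvar := variance_dual_stdGaussian (innerSL ℝ u)
    rw [innerSL_apply_norm, hu, one_pow] at hvar
    exact (hasGaussianLaw_inner_prodMk_inner u u).fst.map_eq_gaussianReal.trans
      (by simp_all [innerSL_apply_apply])

lemma hasLaw_inner_prodMk_inner_stdGaussian (hu : ‖u‖ = 1) (hv : ‖v‖ = 1) (huv : ⟪u, v⟫ = 0) :
    HasLaw (fun a ↦ (⟪u, a⟫, ⟪v, a⟫)) ((gaussianReal 0 1).prod (gaussianReal 0 1))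
      (ProbabilityTheory.stdGaussian E) := by
  refine IndepFun.hasLaw_prod (hasLaw_inner_stdGaussian hu) (hasLaw_inner_stdGaussian hv) ?_
  refine (hasGaussianLaw_inner_prodMk_inner u v).indepFun_of_covariance_eq_zero ?_
  rw [← covarianceBilin_apply_eq_cov IsGaussian.memLp_two_id, covarianceBilin_stdGaussian,
    innerSL_apply_apply, huv]

lemma hasLaw_sum_mul_prodMk_sum_mul_pi_gaussianReal {ι : Type*} [Fintype ι] {x z : ι → ℝ}
    (hx : ∑ i, x i ^ 2 = 1) (hz : ∑ i, z i ^ 2 = 1) (hxz : ∑ i, x i * z i = 0) :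
    HasLaw (fun a : ι → ℝ ↦ (∑ i, a i * x i, ∑ i, a i * z i))
      ((gaussianReal 0 1).prod (gaussianReal 0 1)) (Measure.pi fun _ ↦ gaussianReal 0 1) := by
  have hpi : HasLaw (WithLp.toLp 2) (ProbabilityTheory.stdGaussian (EuclideanSpace ℝ ι))
      (Measure.pi fun _ ↦ gaussianReal 0 1) := ⟨by fun_prop, map_pi_eq_stdGaussian⟩
  have hpair := hasLaw_inner_prodMk_inner_stdGaussian (u := WithLp.toLp 2 x) (v := WithLp.toLp 2 z)
    (by simp [EuclideanSpace.norm_eq, hx]) (by simp [EuclideanSpace.norm_eq, hz])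
    (by simpa [PiLp.inner_apply, mul_comm] using hxz)
  simpa [Function.comp_def, PiLp.inner_apply] using hpair.comp hpi

end StandardGaussian

section Reduction

section Product

variable {X Y : Type*} [MeasurableSpace X] [MeasurableSpace Y] {μ : Measure X} {ν : Measure Y}
  [IsProbabilityMeasure ν] {f g : X → ℝ} {h : Y → ℝ}

lemma integrable_sub_mul_prod (hfg : Integrable (fun x ↦ f x * g x) μ) (hg : Integrable g μ)
    (hh : Integrable h ν) :
    Integrable (fun p : X × Y ↦ (f p.1 - h p.2) * g p.1) (μ.prod ν) := by
  simpa only [sub_mul, mul_comm (h _)] using! (hfg.comp_fst ν).sub (hg.mul_prod hh)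

lemma integral_sub_mul_prod [SFinite μ] (hfg : Integrable (fun x ↦ f x * g x) μ)
    (hg : Integrable g μ) (hh : Integrable h ν) :
    ∫ p, (f p.1 - h p.2) * g p.1 ∂μ.prod ν = ∫ x, (f x - ∫ y, h y ∂ν) * g x ∂μ := by
  rw [integral_prod _ (integrable_sub_mul_prod hfg hg hh)]
  simp only [integral_mul_const, integral_sub (integrable_const _) hh, integral_const,
    probReal_univ, one_smul]

end Product

lemma integrable_sq_gaussianReal (m : ℝ) (v : NNReal) :
    Integrable (fun t ↦ t ^ 2) (gaussianReal m v) :=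
  (memLp_id_gaussianReal 2).integrable_sq

lemma integral_sq_gaussianReal (v : NNReal) : ∫ t, t ^ 2 ∂gaussianReal 0 v = v := by
  rw [← variance_fun_id_gaussianReal (μ := 0),
    variance_of_integral_eq_zero aemeasurable_id' integral_id_gaussianReal]

lemma integral_sq_sub_sq_mul_pi_gaussianReal {ι : Type*} [Fintype ι] {x z : ι → ℝ}
    (hx : ∑ i, x i ^ 2 = 1) (hz : ∑ i, z i ^ 2 = 1) (hxz : ∑ i, x i * z i = 0) {g : ℝ → ℝ}
    (hg : Integrable g (gaussianReal 0 1))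
    (hsqg : Integrable (fun t ↦ t ^ 2 * g t) (gaussianReal 0 1)) :
    ∫ a, ((∑ i, a i * x i) ^ 2 - (∑ i, a i * z i) ^ 2) * g (∑ i, a i * x i)
      ∂(Measure.pi fun _ : ι ↦ gaussianReal 0 1) =
    ∫ t, (t ^ 2 - 1) * g t ∂gaussianReal 0 1 := by
  have hsq := integrable_sq_gaussianReal 0 1
  have hprod := integral_sub_mul_prod hsqg hg hsq
  rw [integral_sq_gaussianReal, NNReal.coe_one] at hprod
  exact ((hasLaw_sum_mul_prodMk_sum_mul_pi_gaussianReal hx hz hxz).integral_comp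
    (integrable_sub_mul_prod hsqg hg hsq).aestronglyMeasurable).trans hprod

lemma setIntegral_gaussianReal_eq_setIntegral_mul {m : ℝ} {v : NNReal} (hv : v ≠ 0) {s : Set ℝ}
    (hs : MeasurableSet s) (f : ℝ → ℝ) :
    ∫ t in s, f t ∂gaussianReal m v = ∫ t in s, gaussianPDFReal m v t * f t := by
  simp only [← integral_indicator hs, integral_gaussianReal_eq_integral_smul hv, smul_eq_mul,
    indicator_mul_right]

lemma integral_comp_abs_gaussianReal {v : NNReal} (hv : v ≠ 0) (f : ℝ → ℝ) :
    ∫ t, f |t| ∂gaussianReal 0 v = 2 * ∫ t in Ioi 0, f t ∂gaussianReal 0 v := by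
  rw [setIntegral_gaussianReal_eq_setIntegral_mul hv measurableSet_Ioi, ← integral_comp_abs,
    integral_gaussianReal_eq_integral_smul hv]
  simp only [gaussianPDFReal, sub_zero, sq_abs, smul_eq_mul]

lemma integral_sq_sub_sq_mul_ite_mul_pi_gaussianReal {ι : Type*} [Fintype ι] {x z : ι → ℝ}
    (hx : ∑ i, x i ^ 2 = 1) (hz : ∑ i, z i ^ 2 = 1) (hxz : ∑ i, x i * z i = 0) {β C : ℝ}
    (hβ : 0 ≤ β) {h : ℝ → ℝ} (hh : Measurable h) (hC : ∀ t, |h t| ≤ C) :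
    ∫ a, ((∑ i, a i * x i) ^ 2 - (∑ i, a i * z i) ^ 2) *
        (if β < |∑ i, a i * x i| then (1 : ℝ) else 0) * h ((∑ i, a i * x i) ^ 2)
      ∂(Measure.pi fun _ : ι ↦ gaussianReal 0 1) =
    2 * ∫ t in Ioi β, (t ^ 2 - 1) * h (t ^ 2) ∂gaussianReal 0 1 := by
  set g : ℝ → ℝ := fun t ↦ (if β < |t| then 1 else 0) * h (t ^ 2) with hg
  have hgm : AEStronglyMeasurable g (gaussianReal 0 1) :=
    ((Measurable.ite (measurableSet_lt measurable_const measurable_id.abs) measurable_const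
      measurable_const).mul (hh.comp (measurable_id.pow_const 2))).aestronglyMeasurable
  have hgC (t : ℝ) : ‖g t‖ ≤ C := by
    simp only [hg, ite_mul, one_mul, zero_mul]
    split_ifs
    exacts [hC _, norm_zero.trans_le ((abs_nonneg _).trans (hC 0))]
  have heven : (fun t ↦ (t ^ 2 - 1) * g t) =
      fun t ↦ (Ioi β).indicator (fun s ↦ (s ^ 2 - 1) * h (s ^ 2)) |t| := by
    ext t
    simp [hg, indicator_apply]
  simp only [mul_assoc]
  rw [integral_sq_sub_sq_mul_pi_gaussianReal hx hz hxz (.of_bound hgm C (ae_of_all _ hgC))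
    ((integrable_sq_gaussianReal 0 1).mul_bdd hgm (ae_of_all _ hgC)), heven,
    integral_comp_abs_gaussianReal one_ne_zero, setIntegral_indicator measurableSet_Ioi,
    Ioi_inter_Ioi, max_eq_right hβ]

end Reduction

section GaussianTail

lemma integrable_sq_mul_exp_neg_mul_sq {b : ℝ} (hb : 0 < b) :
    Integrable fun t : ℝ ↦ t ^ 2 * exp (-b * t ^ 2) := by
  simpa only [rpow_two] using integrable_rpow_mul_exp_neg_mul_sq hb (s := 2) (by norm_num)

lemma integral_Ioi_two_mul_sq_sub_one_mul_exp_neg_mul_sq {b : ℝ} (hb : 0 < b) (β : ℝ) :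
    ∫ t in Ioi β, (2 * b * t ^ 2 - 1) * exp (-b * t ^ 2) = β * exp (-b * β ^ 2) := by
  have hderiv (t : ℝ) : HasDerivAt (fun t ↦ -(t * exp (-b * t ^ 2)))
      ((2 * b * t ^ 2 - 1) * exp (-b * t ^ 2)) t := by
    convert! ((hasDerivAt_id t).mul ((hasDerivAt_pow 2 t).const_mul (-b)).exp).neg using 1
    simp only [id_eq, Nat.cast_ofNat, Nat.add_one_sub_one, pow_one, one_mul]
    ring
  have hint : Integrable fun t : ℝ ↦ (2 * b * t ^ 2 - 1) * exp (-b * t ^ 2) := by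
    simpa only [sub_mul, mul_assoc, one_mul] using!
      (((integrable_sq_mul_exp_neg_mul_sq hb).const_mul b).const_mul 2).sub
        (integrable_exp_neg_mul_sq hb)
  have hlim : Tendsto (fun t ↦ -(t * exp (-b * t ^ 2))) atTop (𝓝 0) :=
    tendsto_zero_of_hasDerivAt_of_integrableOn_Ioi (a := β) (fun t _ ↦ hderiv t)
      hint.integrableOn (integrable_mul_exp_neg_mul_sq hb).neg.integrableOn
  rw [integral_Ioi_of_hasDerivAt_of_tendsto' (fun t _ ↦ hderiv t) hint.integrableOn hlim,
    zero_sub, neg_neg]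

lemma gaussianPDFReal_zero_one_mul_exp (c t : ℝ) :
    gaussianPDFReal 0 1 t * exp (-c * t ^ 2) =
      (√(2 * π))⁻¹ * exp (-(1 / 2 + c) * t ^ 2) := by
  rw [gaussianPDFReal, mul_assoc, ← exp_add]
  simp only [NNReal.coe_one, mul_one, sub_zero]
  ring_nf

lemma setIntegral_Ioi_sq_sub_one_mul_exp_gaussianReal {c : ℝ} (hc : -1 / 2 < c) (β : ℝ) :
    ∫ t in Ioi β, ((1 + 2 * c) * t ^ 2 - 1) * exp (-c * t ^ 2) ∂gaussianReal 0 1 =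
      β * gaussianPDFReal 0 1 β * exp (-c * β ^ 2) := by
  have hb : 0 < 1 / 2 + c := by linarith
  calc ∫ t in Ioi β, ((1 + 2 * c) * t ^ 2 - 1) * exp (-c * t ^ 2) ∂gaussianReal 0 1
      = ∫ t in Ioi β, (√(2 * π))⁻¹ *
          ((2 * (1 / 2 + c) * t ^ 2 - 1) * exp (-(1 / 2 + c) * t ^ 2)) := by
        rw [setIntegral_gaussianReal_eq_setIntegral_mul one_ne_zero measurableSet_Ioi]
        refine integral_congr_ae (ae_of_all _ fun t ↦ ?_)
        linear_combination ((1 + 2 * c) * t ^ 2 - 1) * gaussianPDFReal_zero_one_mul_exp c t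
    _ = β * gaussianPDFReal 0 1 β * exp (-c * β ^ 2) := by
        rw [integral_const_mul, integral_Ioi_two_mul_sq_sub_one_mul_exp_neg_mul_sq hb, mul_assoc,
          gaussianPDFReal_zero_one_mul_exp, mul_left_comm]

lemma setIntegral_Ioi_sq_sub_one_gaussianReal (β : ℝ) :
    ∫ t in Ioi β, (t ^ 2 - 1) ∂gaussianReal 0 1 = β * gaussianPDFReal 0 1 β := by
  simpa using setIntegral_Ioi_sq_sub_one_mul_exp_gaussianReal (c := 0) (by norm_num) β

lemma integrable_sq_sub_one_gaussianReal :
    Integrable (fun t ↦ t ^ 2 - 1) (gaussianReal 0 1) :=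
  (integrable_sq_gaussianReal 0 1).sub (integrable_const 1)

lemma integrable_sq_sub_one_mul_of_abs_le {h : ℝ → ℝ} {C : ℝ} (hh : Measurable h)
    (hC : ∀ t, |h t| ≤ C) : Integrable (fun t ↦ (t ^ 2 - 1) * h t) (gaussianReal 0 1) :=
  integrable_sq_sub_one_gaussianReal.mul_bdd hh.aestronglyMeasurable (ae_of_all _ hC)

lemma integrable_sq_sub_one_mul_exp_gaussianReal {c : ℝ} (hc : 0 ≤ c) (k : ℝ) :
    Integrable (fun t ↦ (k * t ^ 2 - 1) * exp (-c * t ^ 2)) (gaussianReal 0 1) := by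
  refine (((integrable_sq_gaussianReal 0 1).const_mul k).sub (integrable_const 1)).mul_bdd (c := 1)
    (by fun_prop) (ae_of_all _ fun t ↦ ?_)
  rw [norm_of_nonneg (exp_pos _).le, exp_le_one_iff, neg_mul, neg_nonpos]
  positivity

lemma setIntegral_Ioi_sq_sub_one_mul_exp_gaussianReal_le {c : ℝ} (hc : 0 ≤ c) (β : ℝ) :
    ∫ t in Ioi β, (t ^ 2 - 1) * exp (-c * t ^ 2) ∂gaussianReal 0 1 ≤
      (1 + 2 * c)⁻¹ * (β * gaussianPDFReal 0 1 β * exp (-c * β ^ 2)) := by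
  rw [← setIntegral_Ioi_sq_sub_one_mul_exp_gaussianReal (by linarith) β, ← integral_const_mul]
  refine setIntegral_mono
    (by simpa using (integrable_sq_sub_one_mul_exp_gaussianReal hc 1).integrableOn)
    ((integrable_sq_sub_one_mul_exp_gaussianReal hc _).const_mul _).integrableOn fun t ↦ ?_
  dsimp only
  rw [← mul_assoc]
  gcongr
  rw [mul_sub, inv_mul_cancel_left₀ (by positivity), mul_one]
  linarith [inv_le_one_of_one_le₀ (by linarith : 1 ≤ 1 + 2 * c)]

end GaussianTail

section Monotone

lemma mul_setIntegral_le_setIntegral_mul_of_monotoneOn {μ : Measure ℝ} {s : Set ℝ} {w h : ℝ → ℝ}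
    {c : ℝ} (hs : MeasurableSet s) (hneg : ∀ t ∈ s, t < c → w t ≤ 0)
    (hpos : ∀ t ∈ s, c < t → 0 ≤ w t) (hh : MonotoneOn h (insert c s))
    (hw : IntegrableOn w s μ) (hwh : IntegrableOn (fun t ↦ w t * h t) s μ) :
    h c * ∫ t in s, w t ∂μ ≤ ∫ t in s, w t * h t ∂μ := by
  rw [← integral_const_mul]
  refine setIntegral_mono_on (hw.const_mul _) hwh hs fun t ht ↦ ?_
  rw [mul_comm]
  rcases lt_trichotomy t c with htc | rfl | hct
  · exact mul_le_mul_of_nonpos_left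
      (hh (mem_insert_of_mem c ht) (mem_insert c s) htc.le) (hneg t ht htc)
  · exact le_rfl
  · exact mul_le_mul_of_nonneg_left
      (hh (mem_insert c s) (mem_insert_of_mem c ht) hct.le) (hpos t ht hct)

variable {h : ℝ → ℝ} {β : ℝ}

lemma mul_gaussianPDFReal_le_setIntegral_Ioi_of_monotoneOn (hh : MonotoneOn h (Ici 0))
    (hβ : 0 ≤ β)
    (hint : IntegrableOn (fun t ↦ (t ^ 2 - 1) * h t) (Ioi β) (gaussianReal 0 1)) :
    h (max 1 β) * (β * gaussianPDFReal 0 1 β) ≤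
      ∫ t in Ioi β, (t ^ 2 - 1) * h t ∂gaussianReal 0 1 := by
  rw [← setIntegral_Ioi_sq_sub_one_gaussianReal]
  refine mul_setIntegral_le_setIntegral_mul_of_monotoneOn measurableSet_Ioi
    (fun t ht htc ↦ ?_) (fun t _ hct ↦ ?_) (hh.mono ?_)
    integrable_sq_sub_one_gaussianReal.integrableOn hint
  · have ht1 : t < 1 := (lt_max_iff.mp htc).resolve_right (mem_Ioi.mp ht).not_gt
    nlinarith [mem_Ioi.mp ht]
  · nlinarith [(le_max_left 1 β).trans_lt hct]
  · exact insert_subset (by simp) fun t ht ↦ hβ.trans (mem_Ioi.mp ht).le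

lemma setIntegral_Ioi_sq_sub_one_mul_nonneg_of_monotoneOn (hh : MonotoneOn h (Ici 0))
    (hh0 : 0 ≤ h (max 1 β)) (hβ : 0 ≤ β)
    (hint : IntegrableOn (fun t ↦ (t ^ 2 - 1) * h t) (Ioi β) (gaussianReal 0 1)) :
    0 ≤ ∫ t in Ioi β, (t ^ 2 - 1) * h t ∂gaussianReal 0 1 :=
  (mul_nonneg hh0 (mul_nonneg hβ (gaussianPDFReal_nonneg 0 1 β))).trans
    (mul_gaussianPDFReal_le_setIntegral_Ioi_of_monotoneOn hh hβ hint)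

end Monotone

section Tanh

lemma tanh_eq_one_sub (u : ℝ) : tanh u = 1 - 2 / (exp (2 * u) + 1) := by
  rw [tanh_eq, exp_neg, two_mul, exp_add]
  field_simp
  ring

lemma monotone_tanh : Monotone tanh := fun u v huv ↦ by
  simp only [tanh_eq_one_sub]
  gcongr

lemma tanh_nonneg {u : ℝ} (hu : 0 ≤ u) : 0 ≤ tanh u := tanh_zero ▸ monotone_tanh hu

lemma tanh_eq_add_tanh_mul (u : ℝ) :
    tanh u = (1 - exp (-(2 * u))) / 2 + tanh u * ((1 - exp (-(2 * u))) / 2) := by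
  rw [tanh_eq_one_sub, exp_neg]
  field_simp
  ring

lemma monotone_one_sub_exp_div_two : Monotone fun u : ℝ ↦ (1 - exp (-(2 * u))) / 2 :=
  fun u v huv ↦ by
    dsimp only
    gcongr

lemma one_sub_exp_div_two_nonneg {u : ℝ} (hu : 0 ≤ u) : 0 ≤ (1 - exp (-(2 * u))) / 2 := by
  simpa using monotone_one_sub_exp_div_two hu

lemma abs_one_sub_exp_div_two_le_one {u : ℝ} (hu : 0 ≤ u) :
    |(1 - exp (-(2 * u))) / 2| ≤ 1 := by
  rw [abs_of_nonneg (one_sub_exp_div_two_nonneg hu)]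
  linarith [exp_pos (-(2 * u))]

lemma half_le_tanh {u : ℝ} (hu : 2 / 3 ≤ u) : 1 / 2 ≤ tanh u := by
  have hexp : 3 ≤ exp (2 * u) := by
    nlinarith [quadratic_le_exp_of_nonneg (x := 2 * u) (by linarith)]
  have hfrac : 2 / (exp (2 * u) + 1) ≤ 1 / 2 := by
    rw [div_le_div_iff₀ (by positivity) two_pos]
    linarith
  linarith [tanh_eq_one_sub u]

end Tanh

section TailBound

variable {α β : ℝ}

lemma monotoneOn_sq_div (hα : 0 < α) : MonotoneOn (fun t ↦ t ^ 2 / α) (Ici 0) :=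
  fun s hs t _ hst ↦ by
    have : 0 ≤ s := hs
    dsimp only
    gcongr

lemma integrable_sq_sub_one_mul_tanh (α : ℝ) :
    Integrable (fun t ↦ (t ^ 2 - 1) * tanh (t ^ 2 / α)) (gaussianReal 0 1) :=
  integrable_sq_sub_one_mul_of_abs_le (monotone_tanh.measurable.comp (by fun_prop))
    fun _ ↦ (abs_tanh_lt_one _).le

lemma tanh_mul_le_setIntegral_Ioi_tanh (hα : 0 < α) (hβ : 0 ≤ β) :
    tanh (max 1 β ^ 2 / α) * (β * gaussianPDFReal 0 1 β) ≤
      ∫ t in Ioi β, (t ^ 2 - 1) * tanh (t ^ 2 / α) ∂gaussianReal 0 1 :=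
  mul_gaussianPDFReal_le_setIntegral_Ioi_of_monotoneOn
    (monotone_tanh.comp_monotoneOn (monotoneOn_sq_div hα)) hβ
    (integrable_sq_sub_one_mul_tanh α).integrableOn

lemma setIntegral_Ioi_half_one_sub_exp_le_setIntegral_Ioi_tanh (hα : 0 < α) (hβ : 0 ≤ β) :
    ∫ t in Ioi β, (t ^ 2 - 1) * ((1 - exp (-(2 * (t ^ 2 / α)))) / 2) ∂gaussianReal 0 1 ≤
      ∫ t in Ioi β, (t ^ 2 - 1) * tanh (t ^ 2 / α) ∂gaussianReal 0 1 := by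
  set H : ℝ → ℝ := fun u ↦ (1 - exp (-(2 * u))) / 2 with hH
  have hsq (t : ℝ) : 0 ≤ t ^ 2 / α := by positivity
  have hHabs (t : ℝ) : |H (t ^ 2 / α)| ≤ 1 := abs_one_sub_exp_div_two_le_one (hsq t)
  have htanhHabs (t : ℝ) : |tanh (t ^ 2 / α) * H (t ^ 2 / α)| ≤ 1 := by
    rw [abs_mul]
    exact mul_le_one₀ (abs_tanh_lt_one _).le (abs_nonneg _) (hHabs t)
  have hHmeas : Measurable fun t ↦ H (t ^ 2 / α) := by fun_prop
  have htanhHmeas : Measurable fun t ↦ tanh (t ^ 2 / α) * H (t ^ 2 / α) :=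
    (monotone_tanh.measurable.comp (by fun_prop)).mul hHmeas
  have hintH := integrable_sq_sub_one_mul_of_abs_le hHmeas hHabs
  have hintTH := integrable_sq_sub_one_mul_of_abs_le htanhHmeas htanhHabs
  have hmono : MonotoneOn (fun t ↦ tanh (t ^ 2 / α) * H (t ^ 2 / α)) (Ici 0) :=
    (monotone_tanh.comp_monotoneOn (monotoneOn_sq_div hα)).mul
      (monotone_one_sub_exp_div_two.comp_monotoneOn (monotoneOn_sq_div hα))
      (fun t _ ↦ tanh_nonneg (hsq t)) (fun t _ ↦ one_sub_exp_div_two_nonneg (hsq t))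
  calc ∫ t in Ioi β, (t ^ 2 - 1) * H (t ^ 2 / α) ∂gaussianReal 0 1
      ≤ ∫ t in Ioi β, (t ^ 2 - 1) * H (t ^ 2 / α) ∂gaussianReal 0 1 +
        ∫ t in Ioi β, (t ^ 2 - 1) * (tanh (t ^ 2 / α) * H (t ^ 2 / α)) ∂gaussianReal 0 1 :=
        le_add_of_nonneg_right (setIntegral_Ioi_sq_sub_one_mul_nonneg_of_monotoneOn hmono
          (mul_nonneg (tanh_nonneg (hsq _)) (one_sub_exp_div_two_nonneg (hsq _))) hβ
          hintTH.integrableOn)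
    _ = ∫ t in Ioi β, (t ^ 2 - 1) * tanh (t ^ 2 / α) ∂gaussianReal 0 1 := by
        rw [← integral_add hintH.integrableOn hintTH.integrableOn]
        simp only [← mul_add, hH, ← tanh_eq_add_tanh_mul]

lemma half_mul_one_sub_div_add_four_le_setIntegral_Ioi_tanh (hα : 0 < α) (hβ : 0 ≤ β) :
    1 / 2 * (β * gaussianPDFReal 0 1 β) * (1 - α / (α + 4) * exp (-(2 * (β ^ 2 / α)))) ≤
      ∫ t in Ioi β, (t ^ 2 - 1) * tanh (t ^ 2 / α) ∂gaussianReal 0 1 := by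
  refine le_trans ?_ (setIntegral_Ioi_half_one_sub_exp_le_setIntegral_Ioi_tanh hα hβ)
  have hc : 0 ≤ 2 / α := by positivity
  have hexp (t : ℝ) : exp (-(2 * (t ^ 2 / α))) = exp (-(2 / α) * t ^ 2) := by
    ring_nf
  have hsplit (t : ℝ) : (t ^ 2 - 1) * ((1 - exp (-(2 / α) * t ^ 2)) / 2) =
      1 / 2 * ((t ^ 2 - 1) - (t ^ 2 - 1) * exp (-(2 / α) * t ^ 2)) := by ring
  have hint : Integrable (fun t ↦ (t ^ 2 - 1) * exp (-(2 / α) * t ^ 2)) (gaussianReal 0 1) := by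
    simpa only [one_mul] using integrable_sq_sub_one_mul_exp_gaussianReal hc 1
  have hmoment := setIntegral_Ioi_sq_sub_one_mul_exp_gaussianReal_le hc β
  have hconst : (1 + 2 * (2 / α))⁻¹ = α / (α + 4) := by
    field_simp
    ring
  simp only [hexp, hsplit]
  rw [integral_const_mul, integral_sub integrable_sq_sub_one_gaussianReal.integrableOn
    hint.integrableOn, setIntegral_Ioi_sq_sub_one_gaussianReal]
  rw [hconst] at hmoment
  linarith

lemma div_add_four_le_rpow (hα : 3 / 2 ≤ α) : α / (α + 4) ≤ (α / (2 + α)) ^ (3 / 2 : ℝ) := by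
  have : 0 < α := by linarith
  have hsq : ((α / (2 + α)) ^ (3 / 2 : ℝ)) ^ 2 = (α / (2 + α)) ^ 3 := by
    rw [← rpow_mul_natCast (by positivity), ← rpow_natCast]
    norm_num
  refine le_of_sq_le_sq ?_ (by positivity)
  rw [hsq, div_pow, div_pow, div_le_div_iff₀ (by positivity) (by positivity)]
  have hfactor : α ^ 3 * (α + 4) ^ 2 - α ^ 2 * (2 + α) ^ 3 = 2 * α ^ 2 * (α ^ 2 + 2 * α - 4) := by
    ring
  have hquad : 0 ≤ α ^ 2 + 2 * α - 4 := by nlinarith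
  linarith [hfactor, mul_nonneg (by positivity : 0 ≤ 2 * α ^ 2) hquad]

lemma half_mul_one_sub_exp_mul_rpow_le_setIntegral_Ioi_tanh (hα : 0 < α) (hβ : 0 ≤ β) :
    1 / 2 * (β * gaussianPDFReal 0 1 β) *
        (1 - exp (-β ^ 2 / α) * (α / (2 + α)) ^ (3 / 2 : ℝ)) ≤
      ∫ t in Ioi β, (t ^ 2 - 1) * tanh (t ^ 2 / α) ∂gaussianReal 0 1 := by
  have hφ : 0 ≤ β * gaussianPDFReal 0 1 β := mul_nonneg hβ (gaussianPDFReal_nonneg 0 1 β)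
  have hs : 0 ≤ β ^ 2 / α := by positivity
  rcases le_total α (3 / 2) with hα' | hα'
  · have htanh : 1 / 2 ≤ tanh (max 1 β ^ 2 / α) := by
      refine half_le_tanh ?_
      rw [le_div_iff₀ hα]
      nlinarith [le_max_left 1 β]
    calc 1 / 2 * (β * gaussianPDFReal 0 1 β) *
          (1 - exp (-β ^ 2 / α) * (α / (2 + α)) ^ (3 / 2 : ℝ))
        ≤ 1 / 2 * (β * gaussianPDFReal 0 1 β) :=
          mul_le_of_le_one_right (by positivity) (sub_le_self _ (by positivity))
      _ ≤ tanh (max 1 β ^ 2 / α) * (β * gaussianPDFReal 0 1 β) := by gcongr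
      _ ≤ _ := tanh_mul_le_setIntegral_Ioi_tanh hα hβ
  · refine le_trans ?_ (half_mul_one_sub_div_add_four_le_setIntegral_Ioi_tanh hα hβ)
    rw [mul_comm (exp _)]
    gcongr
    · exact div_add_four_le_rpow hα'
    · rw [neg_div]
      linarith

lemma exp_mul_rpow_lt_one (hα : 0 < α) (hβ : 0 < β) :
    exp (-β ^ 2 / α) * (α / (2 + α)) ^ (3 / 2 : ℝ) < 1 := by
  have hexp : exp (-β ^ 2 / α) < 1 := by
    rw [exp_lt_one_iff, neg_div, neg_lt_zero]
    positivity
  have hrpow : (α / (2 + α)) ^ (3 / 2 : ℝ) ≤ 1 :=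
    rpow_le_one (by positivity) (div_le_one_of_le₀ (by linarith) (by positivity)) (by norm_num)
  exact mul_lt_one_of_nonneg_of_lt_one_left (exp_pos _).le hexp hrpow

end TailBound

/-- For `a ~ N(0, I_n)`, orthonormal `x, z ∈ ℝⁿ` and `α, β > 0`,
`E[((aᵀx)² − (aᵀz)²)·1{|aᵀx| > β}·tanh((aᵀx)²/α)]
  ≥ (β e^{−β²/2}/√(2π))(1 − e^{−β²/α}(α/(2+α))^{3/2}) > 0`. -/
theorem eigengap_expectation_lower_bound (n : ℕ) (x z : Fin n → ℝ)
    (hx : ∑ i, x i ^ 2 = 1) (hz : ∑ i, z i ^ 2 = 1) (hxz : ∑ i, x i * z i = 0)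
    (α β : ℝ) (hα : 0 < α) (hβ : 0 < β) :
    (∫ a, ((∑ i, a i * x i) ^ 2 - (∑ i, a i * z i) ^ 2) *
          (if β < |∑ i, a i * x i| then (1 : ℝ) else 0) *
          Real.tanh ((∑ i, a i * x i) ^ 2 / α) ∂(stdGaussian n)
        ≥ (β * Real.exp (-β ^ 2 / 2) / Real.sqrt (2 * π)) *
            (1 - Real.exp (-β ^ 2 / α) * (α / (2 + α)) ^ ((3 : ℝ) / 2))) ∧
    0 < (β * Real.exp (-β ^ 2 / 2) / Real.sqrt (2 * π)) *
          (1 - Real.exp (-β ^ 2 / α) * (α / (2 + α)) ^ ((3 : ℝ) / 2)) := by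
  have hφ : β * exp (-β ^ 2 / 2) / √(2 * π) = β * gaussianPDFReal 0 1 β := by
    simp only [gaussianPDFReal, NNReal.coe_one, mul_one, sub_zero]
    ring
  have hreduce := integral_sq_sub_sq_mul_ite_mul_pi_gaussianReal hx hz hxz hβ.le
    (h := fun s ↦ tanh (s / α)) (monotone_tanh.measurable.comp (by fun_prop))
    fun _ ↦ (abs_tanh_lt_one _).le
  rw [hφ, _root_.stdGaussian, hreduce]
  constructor
  · linarith [half_mul_one_sub_exp_mul_rpow_le_setIntegral_Ioi_tanh hα hβ.le]
  · exact mul_pos (mul_pos hβ (gaussianPDFReal_pos 0 1 β one_ne_zero))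
      (sub_pos.mpr (exp_mul_rpow_lt_one hα hβ))
end

section
/- Define g(x) = x² f(x) where f is the TanhWFQ weight profile: f(x) = (1 − tanh(x² − x))·x restricted appropriately. Then for x < 0 or x > 1, the second derivative of t ↦ t² f(s(x)) in the form given satisfies: d²/dt² [ρ² t² f(s/(tρ))] = ρ² ((2x−1)² tanh(x² − x) − 1) · 2x³ sech²(x² − x) with x = s/(tρ), and this expression is bounded in absolute value by an absolute constant times ρ². -/
/-!
The profile `f v = g v * v`, `g v = 1 - tanh (v ^ 2 - v)`, vanishes at `0`, so with `c = s / ρ` the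
map `t ↦ t ^ 2 * f (c / t)` is `c` times the perspective `t * g (c / t)` of `g`. Differentiating a
perspective twice cancels the first-order terms and leaves `c ^ 2 / t ^ 3 * g'' (c / t)`.

For the bound put `y = v ^ 2 - v`. Each polynomial factor is controlled by a polynomial in `|y|`,
of total degree three, whereas `cosh y ^ 2 ≥ (1 + y ^ 2 / 2) ^ 2` grows like `y ^ 4`.
-/

open Real

open scoped Topology

section Perspective

variable {𝕜 F : Type*} [NontriviallyNormedField 𝕜] [NormedAddCommGroup F] [NormedSpace 𝕜 F]

/-- The perspective `t • g (c / t)` of a function `g` of one variable, the degree-one homogeneous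
extension of `g` to pairs `(c, t)`. At `t = 0` its value is `0`. -/
def perspective (g : 𝕜 → F) (c t : 𝕜) : F :=
  t • g (c / t)

variable {c t : 𝕜}

lemma hasDerivAt_const_div (ht : t ≠ 0) : HasDerivAt (fun r ↦ c / r) (-(c / t ^ 2)) t := by
  simpa only [div_eq_mul_inv, mul_neg] using (hasDerivAt_inv ht).const_mul c

lemma hasDerivAt_perspective {g : 𝕜 → F} {g' : F} (ht : t ≠ 0) (hg : HasDerivAt g g' (c / t)) :
    HasDerivAt (perspective g c) (g (c / t) - (c / t) • g') t := by
  refine ((hasDerivAt_id t).smul (hg.scomp t (hasDerivAt_const_div ht))).congr_deriv ?_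
  have hscale : t * -(c / t ^ 2) = -(c / t) := by field_simp
  rw [id, smul_smul, hscale, neg_smul, one_smul, Function.comp_apply, neg_add_eq_sub]

lemma hasDerivAt_sub_id_smul {g g' : 𝕜 → F} {g'' : F} {x : 𝕜} (hg : HasDerivAt g (g' x) x)
    (hg' : HasDerivAt g' g'' x) : HasDerivAt (fun v ↦ g v - v • g' v) (-(x • g'')) x := by
  refine (hg.sub ((hasDerivAt_id x).smul hg')).congr_deriv ?_
  simp only [id, one_smul]
  abel

theorem deriv_deriv_perspective {g g' : 𝕜 → F} {g'' : F} (ht : t ≠ 0)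
    (hg : ∀ᶠ x in 𝓝 (c / t), HasDerivAt g (g' x) x) (hg' : HasDerivAt g' g'' (c / t)) :
    deriv (deriv (perspective g c)) t = (c ^ 2 / t ^ 3) • g'' := by
  have hdiv := hasDerivAt_const_div (c := c) ht
  have hfirst : deriv (perspective g c) =ᶠ[𝓝 t] (fun v ↦ g v - v • g' v) ∘ fun r ↦ c / r := by
    filter_upwards [hdiv.continuousAt.eventually hg, isOpen_ne.mem_nhds ht] with r hr hr0
    exact (hasDerivAt_perspective hr0 hr).deriv
  have hsecond := (hasDerivAt_sub_id_smul hg.self_of_nhds hg').scomp t hdiv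
  rw [hfirst.deriv_eq, hsecond.deriv, smul_neg, neg_smul, neg_neg, smul_smul]
  congr 1
  field_simp

theorem deriv_deriv_sq_mul_comp_const_div {g g' : 𝕜 → 𝕜} {g'' : 𝕜} (ht : t ≠ 0)
    (hg : ∀ᶠ x in 𝓝 (c / t), HasDerivAt g (g' x) x) (hg' : HasDerivAt g' g'' (c / t)) :
    deriv (deriv fun r ↦ r ^ 2 * (g (c / r) * (c / r))) t = (c / t) ^ 3 * g'' := by
  have hpersp : (fun r ↦ r ^ 2 * (g (c / r) * (c / r))) = fun r ↦ c * perspective g c r := by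
    funext r
    rcases eq_or_ne r 0 with rfl | hr
    · simp [perspective]
    · rw [perspective, smul_eq_mul]
      field_simp
  rw [hpersp, deriv_const_mul_field', deriv_const_mul_field, deriv_deriv_perspective ht hg hg',
    smul_eq_mul]
  field_simp

end Perspective

lemma hasDerivAt_tanh (y : ℝ) : HasDerivAt tanh ((1 / cosh y) ^ 2) y := by
  have htanh : tanh = sinh / cosh := funext tanh_eq_sinh_div_cosh
  rw [htanh]
  refine ((hasDerivAt_sinh y).div (hasDerivAt_cosh y) (cosh_pos y).ne').congr_deriv ?_
  rw [← sq, ← sq, cosh_sq_sub_sinh_sq, one_div_pow]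

lemma hasDerivAt_one_div_cosh_sq (y : ℝ) :
    HasDerivAt (fun z ↦ (1 / cosh z) ^ 2) (-(2 * tanh y * (1 / cosh y) ^ 2)) y := by
  have hcosh := (cosh_pos y).ne'
  simp only [one_div]
  refine (((hasDerivAt_cosh y).fun_inv hcosh).fun_pow 2).congr_deriv ?_
  rw [tanh_eq_sinh_div_cosh]
  push_cast
  field_simp

lemma one_add_sq_div_two_le_cosh (y : ℝ) : 1 + y ^ 2 / 2 ≤ cosh y := by
  have hpartial := sum_le_hasSum (Finset.range 2)
    (fun n _ ↦ div_nonneg ((even_two_mul n).pow_nonneg y) (Nat.cast_nonneg _)) (hasSum_cosh y)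
  simpa [Finset.sum_range_succ] using hpartial

/-- The factor `g` of the TanhWFQ weight profile `f v = g v * v`. -/
noncomputable def tanhWFQFactor (v : ℝ) : ℝ :=
  1 - tanh (v ^ 2 - v)

lemma hasDerivAt_sq_sub_self (v : ℝ) : HasDerivAt (fun x : ℝ ↦ x ^ 2 - x) (2 * v - 1) v := by
  simpa using (hasDerivAt_pow 2 v).fun_sub (hasDerivAt_id' v)

lemma hasDerivAt_tanhWFQFactor (v : ℝ) :
    HasDerivAt tanhWFQFactor (-((1 / cosh (v ^ 2 - v)) ^ 2 * (2 * v - 1))) v :=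
  ((hasDerivAt_tanh _).comp v (hasDerivAt_sq_sub_self v)).const_sub 1

lemma hasDerivAt_deriv_tanhWFQFactor (v : ℝ) :
    HasDerivAt (fun x ↦ -((1 / cosh (x ^ 2 - x)) ^ 2 * (2 * x - 1)))
      (2 * ((2 * v - 1) ^ 2 * tanh (v ^ 2 - v) - 1) * (1 / cosh (v ^ 2 - v)) ^ 2) v := by
  have hsech := (hasDerivAt_one_div_cosh_sq _).comp v (hasDerivAt_sq_sub_self v)
  have hlin : HasDerivAt (fun x : ℝ ↦ 2 * x - 1) 2 v := by
    simpa using ((hasDerivAt_id' v).const_mul 2).sub_const 1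
  refine (hsech.mul hlin).neg.congr_deriv ?_
  simp only [Function.comp_apply]
  ring

lemma deriv_deriv_sq_mul_tanhWFQ (c : ℝ) {t : ℝ} (ht : t ≠ 0) :
    deriv (deriv fun r ↦ r ^ 2 * ((1 - tanh ((c / r) ^ 2 - c / r)) * (c / r))) t =
      ((2 * (c / t) - 1) ^ 2 * tanh ((c / t) ^ 2 - c / t) - 1) * (2 * (c / t) ^ 3) *
        (1 / cosh ((c / t) ^ 2 - c / t)) ^ 2 := by
  have hsecond := deriv_deriv_sq_mul_comp_const_div ht
    (.of_forall hasDerivAt_tanhWFQFactor) (hasDerivAt_deriv_tanhWFQFactor (c / t))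
  refine hsecond.trans ?_
  ring

lemma abs_sq_mul_tanh_sub_one_le (v : ℝ) :
    |(2 * v - 1) ^ 2 * tanh (v ^ 2 - v) - 1| ≤ 2 * (2 * |v ^ 2 - v| + 1) := by
  set y := v ^ 2 - v with hy
  calc |(2 * v - 1) ^ 2 * tanh y - 1|
    _ ≤ (2 * v - 1) ^ 2 * |tanh y| + 1 := by
      exact (abs_sub _ _).trans_eq (by rw [abs_mul, abs_one, abs_sq])
    _ ≤ (2 * v - 1) ^ 2 * 1 + 1 := by gcongr; exact (abs_tanh_lt_one y).le
    _ = 2 * (2 * y + 1) := by rw [hy]; ring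
    _ ≤ 2 * (2 * |y| + 1) := by gcongr; exact le_abs_self y

lemma abs_two_mul_cube_le (v : ℝ) :
    |2 * v ^ 3| ≤ 2 * (2 * |v ^ 2 - v| + 1) * (|v ^ 2 - v| + 1) := by
  have hsq : v ^ 2 ≤ 2 * |v ^ 2 - v| + 1 := by
    linarith [two_mul_le_add_sq v 1, le_abs_self (v ^ 2 - v)]
  calc |2 * v ^ 3|
    _ = v ^ 2 * (2 * |v| * 1) := by
      rw [abs_mul, abs_pow, abs_two, ← sq_abs v]; ring
    _ ≤ v ^ 2 * (v ^ 2 + 1) := by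
      gcongr; simpa using two_mul_le_add_sq |v| 1
    _ ≤ (2 * |v ^ 2 - v| + 1) * (2 * |v ^ 2 - v| + 1 + 1) := by gcongr
    _ = 2 * (2 * |v ^ 2 - v| + 1) * (|v ^ 2 - v| + 1) := by ring

lemma cubic_abs_le_cosh_sq (y : ℝ) : 4 * (2 * |y| + 1) ^ 2 * (|y| + 1) ≤ 54 * cosh y ^ 2 := by
  have hcosh : 1 + |y| ^ 2 / 2 ≤ cosh y := by
    simpa only [sq_abs] using one_add_sq_div_two_le_cosh y
  have hquad : (2 * |y| + 1) ^ 2 ≤ 9 * cosh y := by linarith [sq_nonneg (|y| - 4)]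
  have hlin : |y| + 1 ≤ 3 / 2 * cosh y := by linarith [two_mul_le_add_sq |y| 1, sq_nonneg |y|]
  calc 4 * (2 * |y| + 1) ^ 2 * (|y| + 1)
    _ ≤ 4 * (9 * cosh y) * (3 / 2 * cosh y) := by gcongr
    _ = 54 * cosh y ^ 2 := by ring

theorem abs_tanhWFQ_second_derivative_le (v : ℝ) :
    |((2 * v - 1) ^ 2 * tanh (v ^ 2 - v) - 1) * (2 * v ^ 3) * (1 / cosh (v ^ 2 - v)) ^ 2| ≤ 54 := by
  set y := v ^ 2 - v with hy
  have hnum : |((2 * v - 1) ^ 2 * tanh y - 1) * (2 * v ^ 3)| ≤ 54 * cosh y ^ 2 := by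
    calc |((2 * v - 1) ^ 2 * tanh y - 1) * (2 * v ^ 3)|
      _ ≤ 2 * (2 * |y| + 1) * (2 * (2 * |y| + 1) * (|y| + 1)) := by
        rw [abs_mul, hy]
        gcongr
        exacts [abs_sq_mul_tanh_sub_one_le v, abs_two_mul_cube_le v]
      _ = 4 * (2 * |y| + 1) ^ 2 * (|y| + 1) := by ring
      _ ≤ 54 * cosh y ^ 2 := cubic_abs_le_cosh_sq y
  have hcosh : 0 < cosh y ^ 2 := pow_pos (cosh_pos y) 2
  rwa [one_div_pow, mul_one_div, abs_div, abs_of_pos hcosh, div_le_iff₀ hcosh]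

theorem second_derivative_tanhWFQ_general :
    (∀ ρ s t : ℝ, ρ ≠ 0 → t ≠ 0 →
      deriv (deriv fun t' : ℝ =>
          ρ ^ 2 * t' ^ 2 *
            ((1 - Real.tanh ((s / (t' * ρ)) ^ 2 - s / (t' * ρ))) * (s / (t' * ρ)))) t
        = ρ ^ 2 * (((2 * (s / (t * ρ)) - 1) ^ 2 *
              Real.tanh ((s / (t * ρ)) ^ 2 - s / (t * ρ)) - 1) *
            (2 * (s / (t * ρ)) ^ 3) *
            (1 / Real.cosh ((s / (t * ρ)) ^ 2 - s / (t * ρ))) ^ 2)) ∧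
    ∃ C : ℝ, ∀ v : ℝ,
      |((2 * v - 1) ^ 2 * Real.tanh (v ^ 2 - v) - 1) * (2 * v ^ 3) *
          (1 / Real.cosh (v ^ 2 - v)) ^ 2| ≤ C := by
  refine ⟨fun ρ s t _ ht ↦ ?_, 54, abs_tanhWFQ_second_derivative_le⟩
  simp only [div_mul_eq_div_div_swap s, mul_assoc (ρ ^ 2)]
  rw [deriv_const_mul_field', deriv_const_mul_field, deriv_deriv_sq_mul_tanhWFQ (s / ρ) ht]

/-- On the region `x = s/(tρ) < 0` or `x > 1`, the second derivative of
`t ↦ ρ² t² f(s/(tρ))` (with `f(v) = (1 − tanh(v² − v))v`) equals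
`ρ² ((2x−1)² tanh(x² − x) − 1) · 2x³ sech²(x² − x)`, and the function
`v ↦ ((2v−1)² tanh(v² − v) − 1)·2v³ sech²(v² − v)` is bounded on `(−∞,0) ∪ (1,∞)`,
so the second derivative is bounded in absolute value by an absolute constant times `ρ²`. -/
theorem second_derivative_tanhWFQ :
    (∀ ρ s t : ℝ, 0 < ρ → t ≠ 0 →
      (s / (t * ρ) < 0 ∨ 1 < s / (t * ρ)) →
      deriv (deriv fun t' : ℝ =>
          ρ ^ 2 * t' ^ 2 *
            ((1 - Real.tanh ((s / (t' * ρ)) ^ 2 - s / (t' * ρ))) * (s / (t' * ρ)))) t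
        = ρ ^ 2 * (((2 * (s / (t * ρ)) - 1) ^ 2 *
              Real.tanh ((s / (t * ρ)) ^ 2 - s / (t * ρ)) - 1) *
            (2 * (s / (t * ρ)) ^ 3) *
            (1 / Real.cosh ((s / (t * ρ)) ^ 2 - s / (t * ρ))) ^ 2)) ∧
    ∃ C : ℝ, ∀ v : ℝ, (v < 0 ∨ 1 < v) →
      |((2 * v - 1) ^ 2 * Real.tanh (v ^ 2 - v) - 1) * (2 * v ^ 3) *
          (1 / Real.cosh (v ^ 2 - v)) ^ 2| ≤ C := by
  exact second_derivative_tanhWFQ_general.imp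
    (fun h ρ s t hρ ht _ ↦ h ρ s t hρ.ne' ht) fun ⟨C, hC⟩ ↦ ⟨C, fun v _ ↦ hC v⟩
end
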